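/- arXiv:1906.00810 — 10 statements merged into one kernel-verified Lean document; each statement's English description precedes it below -/
import Mathlib

section
/- Let K ∈ ℝ^{M×M} be symmetric positive definite with smallest and largest eigenvalues λmin(K) and λmax(K), let ξ ≥ 0, set W_ξ = (ξ·Id + K)⁻¹, let L ∈ ℝ^{M×N}, y ∈ ℝ^M, and let Φ ⊆ ℝ^N be nonempty. If ẑ ∈ Φ satisfies ‖Lẑ − y‖_{W_ξ} ≤ ‖Lz − y‖_{W_ξ} for all z ∈ Φ, then for all z ∈ Φ: ‖Lẑ − y‖₂² ≤ ((ξ + λmax(K))/(ξ + λmin(K))) · ‖Lz − y‖₂². (Proposition 2.1, estimate (2.9a).) -/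
open Matrix

lemma aux_dot {M : ℕ} (U : Matrix (Fin M) (Fin M) ℝ) (d : Fin M → ℝ) (x : Fin M → ℝ) :
    x ⬝ᵥ (U * diagonal d * Uᵀ).mulVec x = ∑ i, d i * (Uᵀ.mulVec x i)^2 := by
  rw [← Matrix.mulVec_mulVec, ← Matrix.mulVec_mulVec, Matrix.dotProduct_mulVec,
    ← Matrix.mulVec_transpose]
  simp only [dotProduct, Matrix.mulVec_diagonal]
  exact Finset.sum_congr rfl fun i _ => by ring

lemma aux_spec {M : ℕ} (K : Matrix (Fin M) (Fin M) ℝ) (hK : K.IsHermitian) :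
    ∃ U : Matrix (Fin M) (Fin M) ℝ, U * Uᵀ = 1 ∧ Uᵀ * U = 1 ∧
      K = U * diagonal hK.eigenvalues * Uᵀ := by
  refine ⟨hK.eigenvectorUnitary, ?_, ?_, ?_⟩
  · have := Unitary.coe_mul_star_self hK.eigenvectorUnitary
    rwa [Unitary.coe_star, Matrix.star_eq_conjTranspose, Matrix.conjTranspose_eq_transpose_of_trivial] at this
  · have := Unitary.coe_star_mul_self hK.eigenvectorUnitary
    rwa [Matrix.star_eq_conjTranspose, Matrix.conjTranspose_eq_transpose_of_trivial] at this
  · have := hK.spectral_theorem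
    rw [Unitary.conjStarAlgAut_apply, Matrix.star_eq_conjTranspose,
      Matrix.conjTranspose_eq_transpose_of_trivial] at this
    exact this



/-- **Proposition 2.1, estimate (2.9a).**
Let K be symmetric positive definite with extreme eigenvalues λmin(K), λmax(K),
ξ ≥ 0, W_ξ = (ξ·Id + K)⁻¹, L ∈ ℝ^{M×N}, y ∈ ℝ^M and Φ ⊆ ℝ^N nonempty.  If
ẑ ∈ Φ minimizes ‖Lz − y‖_{W_ξ} over Φ, then for all z ∈ Φ,
‖Lẑ − y‖₂² ≤ ((ξ + λmax(K))/(ξ + λmin(K))) · ‖Lz − y‖₂². -/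
theorem pbdw_background_euclidean_quasi_optimality
    {M N : ℕ} (hM : 0 < M)
    (K : Matrix (Fin M) (Fin M) ℝ) (hK : K.PosDef)
    (ξ : ℝ) (hξ : 0 ≤ ξ)
    (L : Matrix (Fin M) (Fin N) ℝ) (y : Fin M → ℝ)
    (Φ : Set (Fin N → ℝ)) (hΦ : Φ.Nonempty)
    (zhat : Fin N → ℝ) (hmem : zhat ∈ Φ)
    (hopt : ∀ z ∈ Φ,
      Real.sqrt ((L.mulVec zhat - y) ⬝ᵥ
          ((ξ • (1 : Matrix (Fin M) (Fin M) ℝ) + K)⁻¹).mulVec (L.mulVec zhat - y))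
        ≤ Real.sqrt ((L.mulVec z - y) ⬝ᵥ
          ((ξ • (1 : Matrix (Fin M) (Fin M) ℝ) + K)⁻¹).mulVec (L.mulVec z - y))) :
    ∀ z ∈ Φ,
      (L.mulVec zhat - y) ⬝ᵥ (L.mulVec zhat - y)
        ≤ ((ξ + ⨆ i, hK.isHermitian.eigenvalues i) / (ξ + ⨅ i, hK.isHermitian.eigenvalues i))
            * ((L.mulVec z - y) ⬝ᵥ (L.mulVec z - y)) := by
  intro z hz
  have h := hopt z hz
  obtain ⟨U, h1, h2, h3⟩ := aux_spec K hK.isHermitian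
  have hpos : ∀ i, 0 < hK.isHermitian.eigenvalues i := fun i => hK.eigenvalues_pos i
  generalize hK.isHermitian.eigenvalues = l at *
  have : Nonempty (Fin M) := ⟨⟨0, hM⟩⟩
  have hmax : ∀ i, l i ≤ ⨆ i, l i := fun i => le_ciSup (Set.finite_range l).bddAbove i
  have hmin : ∀ i, ⨅ i, l i ≤ l i := fun i => ciInf_le (Set.finite_range l).bddBelow i
  obtain ⟨j, hj⟩ := exists_eq_ciInf_of_finite (f := l)
  have hm : 0 < ⨅ i, l i := hj ▸ hpos j
  generalize (⨆ i, l i) = b at *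
  generalize (⨅ i, l i) = a at *
  have hd : ∀ i, 0 < ξ + l i := fun i => by linarith [hpos i]
  have hinv : (ξ • (1 : Matrix (Fin M) (Fin M) ℝ) + K)⁻¹
      = U * diagonal (fun i => (ξ + l i)⁻¹) * Uᵀ := by
    apply Matrix.inv_eq_right_inv
    have e : ξ • (1 : Matrix (Fin M) (Fin M) ℝ) + K
        = U * diagonal (fun i => ξ + l i) * Uᵀ := by
      have : diagonal (fun i => ξ + l i) = ξ • (1 : Matrix (Fin M) (Fin M) ℝ) + diagonal l := by
        rw [← Matrix.diagonal_one, ← Matrix.diagonal_smul, Matrix.diagonal_add]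
        congr 1; ext i; simp
      rw [this, mul_add, add_mul, ← h3]; simp [h1]
    rw [e]
    calc _ = U * diagonal (fun i => ξ + l i) * (Uᵀ * U) * diagonal (fun i => (ξ + l i)⁻¹) * Uᵀ := by
          simp only [Matrix.mul_assoc]
      _ = U * (diagonal (fun i => ξ + l i) * diagonal (fun i => (ξ + l i)⁻¹)) * Uᵀ := by
          rw [h2, Matrix.mul_one]; simp only [Matrix.mul_assoc]
      _ = 1 := by
          rw [Matrix.diagonal_mul_diagonal]
          have : (fun i => (ξ + l i) * (ξ + l i)⁻¹) = fun _ => (1:ℝ) := by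
            ext i; exact mul_inv_cancel₀ (hd i).ne'
          rw [this, Matrix.diagonal_one, Matrix.mul_one, h1]
  have hid : ∀ x : Fin M → ℝ, x ⬝ᵥ x = ∑ i, (Uᵀ.mulVec x i)^2 := fun x => by
    have := aux_dot U (fun _ => 1) x
    rw [Matrix.diagonal_one, Matrix.mul_one, h1, Matrix.one_mulVec] at this
    simpa using this
  rw [hinv, aux_dot, aux_dot, Real.sqrt_le_sqrt_iff (Finset.sum_nonneg fun i _ =>
    mul_nonneg (inv_nonneg.2 (hd i).le) (sq_nonneg _))] at h
  rw [hid, hid]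
  generalize Uᵀ.mulVec (L.mulVec zhat - y) = u at *
  generalize Uᵀ.mulVec (L.mulVec z - y) = v at *
  have hb : 0 < ξ + b := by linarith [hd j, hmax j]
  have k1 : (ξ + b)⁻¹ * ∑ i, u i ^ 2 ≤ ∑ i, (ξ + l i)⁻¹ * u i ^ 2 := by
    rw [Finset.mul_sum]
    refine Finset.sum_le_sum fun i _ => mul_le_mul_of_nonneg_right ?_ (sq_nonneg _)
    exact inv_anti₀ (hd i) (by linarith [hmax i])
  have k2 : ∑ i, (ξ + l i)⁻¹ * v i ^ 2 ≤ (ξ + a)⁻¹ * ∑ i, v i ^ 2 := by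
    rw [Finset.mul_sum]
    refine Finset.sum_le_sum fun i _ => mul_le_mul_of_nonneg_right ?_ (sq_nonneg _)
    exact inv_anti₀ (by linarith) (by linarith [hmin i])
  have k3 := (k1.trans h).trans k2
  rw [inv_mul_le_iff₀ hb] at k3
  rw [div_eq_mul_inv, mul_assoc]
  exact k3
end

section
/- Let K ∈ ℝ^{M×M} be symmetric positive definite with smallest and largest eigenvalues λmin(K) and λmax(K), let ξ ≥ 0, set W_ξ = (ξ·Id + K)⁻¹, let L ∈ ℝ^{M×N}, y ∈ ℝ^M, and let Φ ⊆ ℝ^N be nonempty. If ẑ ∈ Φ satisfies ‖Lẑ − y‖_{W_ξ} ≤ ‖Lz − y‖_{W_ξ} for all z ∈ Φ, then for all z ∈ Φ: ‖Lẑ − y‖_{K⁻¹}² ≤ (λmax(K)/λmin(K)) · ((ξ + λmin(K))/(ξ + λmax(K))) · ‖Lz − y‖_{K⁻¹}². (Proposition 2.1, estimate (2.9b).) -/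
open Matrix

lemma aux_quad {M : ℕ} (K : Matrix (Fin M) (Fin M) ℝ) (hK : K.PosDef) :
    ∃ U : Matrix (Fin M) (Fin M) ℝ, ∀ (ξ : ℝ), 0 ≤ ξ → ∀ v : Fin M → ℝ,
      v ⬝ᵥ ((ξ • (1 : Matrix (Fin M) (Fin M) ℝ) + K)⁻¹).mulVec v
        = ∑ i, (U.mulVec v i) ^ 2 / (ξ + hK.isHermitian.eigenvalues i) := by
  set U : Matrix (Fin M) (Fin M) ℝ := (hK.isHermitian.eigenvectorUnitary : Matrix (Fin M) (Fin M) ℝ) with hU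
  have h1 : U * Uᵀ = 1 := by
    have := Unitary.coe_mul_star_self hK.isHermitian.eigenvectorUnitary
    simpa [Matrix.star_eq_conjTranspose, Matrix.conjTranspose_eq_transpose_of_trivial] using this
  have h2 : Uᵀ * U = 1 := by
    have := Unitary.coe_star_mul_self hK.isHermitian.eigenvectorUnitary
    simpa [Matrix.star_eq_conjTranspose, Matrix.conjTranspose_eq_transpose_of_trivial] using this
  have hs : K = U * diagonal hK.isHermitian.eigenvalues * Uᵀ := by
    have := hK.isHermitian.spectral_theorem
    rw [Unitary.conjStarAlgAut_apply] at this
    simpa [Matrix.star_eq_conjTranspose, Matrix.conjTranspose_eq_transpose_of_trivial,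
      Function.comp_def] using this
  refine ⟨Uᵀ, fun ξ hξ v => ?_⟩
  set e := hK.isHermitian.eigenvalues with he
  have hpos : ∀ i, 0 < e i := fun i => hK.eigenvalues_pos i
  have hA : ξ • (1 : Matrix (Fin M) (Fin M) ℝ) + K = U * diagonal (fun i => ξ + e i) * Uᵀ := by
    have : diagonal (fun i => ξ + e i) = ξ • (1 : Matrix (Fin M) (Fin M) ℝ) + diagonal e := by
      rw [← diagonal_one, ← diagonal_smul, diagonal_add]
      congr 1
      ext i
      simp
    rw [this, mul_add, add_mul, ← hs]
    simp [h1]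
  have hinv : (ξ • (1 : Matrix (Fin M) (Fin M) ℝ) + K)⁻¹
      = U * diagonal (fun i => (ξ + e i)⁻¹) * Uᵀ := by
    apply Matrix.inv_eq_right_inv
    rw [hA]
    have hd : diagonal (fun i => ξ + e i) * diagonal (fun i => (ξ + e i)⁻¹) = 1 := by
      rw [diagonal_mul_diagonal, ← diagonal_one]
      congr 1
      ext i
      exact mul_inv_cancel₀ (by have := hpos i; positivity)
    calc _ = U * (diagonal (fun i => ξ + e i) * (Uᵀ * U) * diagonal (fun i => (ξ + e i)⁻¹)) * Uᵀ := by
            simp only [mul_assoc]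
      _ = 1 := by rw [h2, mul_one, hd, mul_one, h1]
  rw [hinv, ← mulVec_mulVec, ← mulVec_mulVec, dotProduct_mulVec, ← mulVec_transpose, dotProduct]
  refine Finset.sum_congr rfl fun i _ => ?_
  rw [mulVec_diagonal]
  ring

/-- **Proposition 2.1, estimate (2.9b).**
Let K be symmetric positive definite with extreme eigenvalues λmin(K), λmax(K),
ξ ≥ 0, W_ξ = (ξ·Id + K)⁻¹, L ∈ ℝ^{M×N}, y ∈ ℝ^M and Φ ⊆ ℝ^N nonempty.  If
ẑ ∈ Φ minimizes ‖Lz − y‖_{W_ξ} over Φ, then for all z ∈ Φ,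
‖Lẑ − y‖_{K⁻¹}² ≤ (λmax(K)/λmin(K)) · ((ξ + λmin(K))/(ξ + λmax(K))) · ‖Lz − y‖_{K⁻¹}². -/
theorem pbdw_background_Kinv_quasi_optimality
    {M N : ℕ} (hM : 0 < M)
    (K : Matrix (Fin M) (Fin M) ℝ) (hK : K.PosDef)
    (ξ : ℝ) (hξ : 0 ≤ ξ)
    (L : Matrix (Fin M) (Fin N) ℝ) (y : Fin M → ℝ)
    (Φ : Set (Fin N → ℝ)) (hΦ : Φ.Nonempty)
    (zhat : Fin N → ℝ) (hmem : zhat ∈ Φ)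
    (hopt : ∀ z ∈ Φ,
      Real.sqrt ((L.mulVec zhat - y) ⬝ᵥ
          ((ξ • (1 : Matrix (Fin M) (Fin M) ℝ) + K)⁻¹).mulVec (L.mulVec zhat - y))
        ≤ Real.sqrt ((L.mulVec z - y) ⬝ᵥ
          ((ξ • (1 : Matrix (Fin M) (Fin M) ℝ) + K)⁻¹).mulVec (L.mulVec z - y))) :
    ∀ z ∈ Φ,
      (L.mulVec zhat - y) ⬝ᵥ K⁻¹.mulVec (L.mulVec zhat - y)
        ≤ ((⨆ i, hK.isHermitian.eigenvalues i) / (⨅ i, hK.isHermitian.eigenvalues i))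
            * ((ξ + ⨅ i, hK.isHermitian.eigenvalues i) / (ξ + ⨆ i, hK.isHermitian.eigenvalues i))
            * ((L.mulVec z - y) ⬝ᵥ K⁻¹.mulVec (L.mulVec z - y)) := by
  intro z hz
  obtain ⟨U, hU⟩ := aux_quad K hK
  have h0 : ∀ v : Fin M → ℝ, v ⬝ᵥ K⁻¹.mulVec v
      = ∑ i, (U.mulVec v i) ^ 2 / hK.isHermitian.eigenvalues i := by
    intro v
    simpa using hU 0 le_rfl v
  have ho := hopt z hz
  rw [hU ξ hξ, hU ξ hξ] at ho
  rw [h0, h0]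
  set e := hK.isHermitian.eigenvalues with he
  have hpos : ∀ i, 0 < e i := fun i => hK.eigenvalues_pos i
  have : Nonempty (Fin M) := ⟨⟨0, hM⟩⟩
  set a := ⨅ i, e i with ha
  set b := ⨆ i, e i with hb
  have hai : ∀ i, a ≤ e i := fun i => ciInf_le (Set.finite_range e).bddBelow i
  have hbi : ∀ i, e i ≤ b := fun i => le_ciSup (Set.finite_range e).bddAbove i
  have ha0 : 0 < a := by
    obtain ⟨i, hi⟩ := exists_eq_ciInf_of_finite (f := e)
    rw [ha, ← hi]
    exact hpos i
  have hb0 : 0 < b := (hpos ⟨0, hM⟩).trans_le (hbi _)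
  have ho' := (Real.sqrt_le_sqrt_iff (Finset.sum_nonneg fun i _ => by
    have := hpos i; positivity)).1 ho
  set p := U.mulVec (L.mulVec zhat - y)
  set q := U.mulVec (L.mulVec z - y)
  have s1 : ∑ i, p i ^ 2 / e i ≤ (ξ + a) / a * ∑ i, p i ^ 2 / (ξ + e i) := by
    rw [Finset.mul_sum]
    refine Finset.sum_le_sum fun i _ => ?_
    have h := hpos i
    have h' := hai i
    rw [div_mul_div_comm, div_le_div_iff₀ h (by positivity)]
    have : 0 ≤ p i ^ 2 * (ξ * (e i - a)) :=
      mul_nonneg (sq_nonneg _) (mul_nonneg hξ (sub_nonneg.2 h'))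
    nlinarith
  have s2 : ∑ i, q i ^ 2 / (ξ + e i) ≤ b / (ξ + b) * ∑ i, q i ^ 2 / e i := by
    rw [Finset.mul_sum]
    refine Finset.sum_le_sum fun i _ => ?_
    have h := hpos i
    have h' := hbi i
    rw [div_mul_div_comm, div_le_div_iff₀ (by positivity) (by positivity)]
    have : 0 ≤ q i ^ 2 * (ξ * (b - e i)) :=
      mul_nonneg (sq_nonneg _) (mul_nonneg hξ (sub_nonneg.2 h'))
    nlinarith
  calc _ ≤ _ := s1
    _ ≤ (ξ + a) / a * (b / (ξ + b) * ∑ i, q i ^ 2 / e i) := by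
      gcongr
      exact ho'.trans s2
    _ = _ := by ring
end

section
/- Let K ∈ ℝ^{M×M} be symmetric positive definite, L ∈ ℝ^{M×N}, y ∈ ℝ^M, and let Φ ⊆ ℝ^N be nonempty and closed. Let (ξ_i)_{i≥1} be a sequence of positive reals with ξ_i → ∞, and for each i let ẑ_i ∈ Φ satisfy ‖Lẑ_i − y‖_{W_{ξ_i}} ≤ ‖Lz − y‖_{W_{ξ_i}} for all z ∈ Φ, where W_ξ = (ξ·Id + K)⁻¹. If z* is a cluster point of the sequence (ẑ_i), then z* ∈ Φ and ‖Lz* − y‖₂ ≤ ‖Lz − y‖₂ for all z ∈ Φ, i.e., z* solves the limit problem min_{z ∈ Φ} ‖Lz − y‖₂. (Corollary 2.2, statement (i).) -/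
open Matrix

/-- **Corollary 2.2, statement (i).**
Let ξ_i → ∞ and let ẑ_i ∈ Φ minimize ‖Lz − y‖_{W_{ξ_i}} over the nonempty
closed set Φ, where W_ξ = (ξ·Id + K)⁻¹.  Then any cluster point z* of (ẑ_i)
belongs to Φ and solves the limit problem min_{z ∈ Φ} ‖Lz − y‖₂. -/
theorem pbdw_limit_xi_to_infty
    {M N : ℕ}
    (K : Matrix (Fin M) (Fin M) ℝ) (hK : K.PosDef)
    (L : Matrix (Fin M) (Fin N) ℝ) (y : Fin M → ℝ)
    (Φ : Set (Fin N → ℝ)) (hΦne : Φ.Nonempty) (hΦcl : IsClosed Φ)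
    (ξ : ℕ → ℝ) (hξpos : ∀ i, 0 < ξ i)
    (hξlim : Filter.Tendsto ξ Filter.atTop Filter.atTop)
    (zhat : ℕ → Fin N → ℝ) (hmem : ∀ i, zhat i ∈ Φ)
    (hopt : ∀ i, ∀ z ∈ Φ,
      Real.sqrt ((L.mulVec (zhat i) - y) ⬝ᵥ
          ((ξ i • (1 : Matrix (Fin M) (Fin M) ℝ) + K)⁻¹).mulVec (L.mulVec (zhat i) - y))
        ≤ Real.sqrt ((L.mulVec z - y) ⬝ᵥ
          ((ξ i • (1 : Matrix (Fin M) (Fin M) ℝ) + K)⁻¹).mulVec (L.mulVec z - y)))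
    (zstar : Fin N → ℝ) (hcluster : MapClusterPt zstar Filter.atTop zhat) :
    zstar ∈ Φ ∧ ∀ z ∈ Φ,
      Real.sqrt ((L.mulVec zstar - y) ⬝ᵥ (L.mulVec zstar - y))
        ≤ Real.sqrt ((L.mulVec z - y) ⬝ᵥ (L.mulVec z - y)) := by
  have hB : Filter.Tendsto (fun i => ξ i • (ξ i • (1 : Matrix (Fin M) (Fin M) ℝ) + K)⁻¹)
      Filter.atTop (nhds 1) := by
    have h1 : Filter.Tendsto (fun i => (1 : Matrix (Fin M) (Fin M) ℝ) + (ξ i)⁻¹ • K)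
        Filter.atTop (nhds 1) := by
      have h := (tendsto_inv_atTop_zero.comp hξlim).smul_const K
      simpa using h.const_add (1 : Matrix (Fin M) (Fin M) ℝ)
    have h2 : Filter.Tendsto (fun i => ((1 : Matrix (Fin M) (Fin M) ℝ) + (ξ i)⁻¹ • K)⁻¹)
        Filter.atTop (nhds 1) := by
      have hd := ((continuous_id.matrix_det (A := fun A : Matrix (Fin M) (Fin M) ℝ => A)).tendsto
        1).comp h1
      have ha := ((continuous_id.matrix_adjugate
        (A := fun A : Matrix (Fin M) (Fin M) ℝ => A)).tendsto 1).comp h1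
      have := (hd.inv₀ (by simp)).smul ha
      simpa [Matrix.inv_def, Function.comp_def] using this
    refine h2.congr fun i => ?_
    have hi := hξpos i
    have hP : (ξ i • (1 : Matrix (Fin M) (Fin M) ℝ) + K).PosDef :=
      (Matrix.PosDef.one.smul hi).add hK
    have hu := (Matrix.isUnit_iff_isUnit_det _).1 hP.isUnit
    apply Matrix.inv_eq_right_inv
    have e : (1 : Matrix (Fin M) (Fin M) ℝ) + (ξ i)⁻¹ • K
        = (ξ i)⁻¹ • (ξ i • (1 : Matrix (Fin M) (Fin M) ℝ) + K) := by
      rw [smul_add, smul_smul, inv_mul_cancel₀ hi.ne', one_smul]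
    rw [e, smul_mul_smul_comm, inv_mul_cancel₀ hi.ne', one_smul, Matrix.mul_nonsing_inv _ hu]
  obtain ⟨U, hU, hz⟩ := mapClusterPt_iff_ultrafilter.1 hcluster
  refine ⟨hΦcl.mem_of_tendsto hz (Filter.Eventually.of_forall hmem), fun z hzΦ => ?_⟩
  have hc : Continuous fun p : Matrix (Fin M) (Fin M) ℝ × (Fin N → ℝ) =>
      Real.sqrt ((L.mulVec p.2 - y) ⬝ᵥ p.1.mulVec (L.mulVec p.2 - y)) := by
    fun_prop
  have t1 := (hc.tendsto (1, zstar)).comp ((hB.mono_left hU).prodMk_nhds hz)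
  have t2 := (hc.tendsto (1, z)).comp ((hB.mono_left hU).prodMk_nhds
    (tendsto_const_nhds (x := z)))
  have := le_of_tendsto_of_tendsto' t1 t2 fun i => by
    simp only [Function.comp, Matrix.smul_mulVec, dotProduct_smul, smul_eq_mul]
    rw [Real.sqrt_mul (hξpos i).le, Real.sqrt_mul (hξpos i).le]
    exact mul_le_mul_of_nonneg_left (hopt i z hzΦ) (Real.sqrt_nonneg _)
  simpa only [Matrix.one_mulVec] using this
end

section
/- Let A: ℝ^M → U be a linear map, let ℓ: U → ℝ^M be a bounded linear map, and set A_ℓ = A ∘ ℓ: U → U. Suppose A_ℓ(u) = u for every u in the range of A. Then A_ℓ is idempotent, i.e., A_ℓ ∘ A_ℓ = A_ℓ; and if moreover A_ℓ ≠ 0 and A_ℓ ≠ id_U, then ‖id_U − A_ℓ‖ = ‖A_ℓ‖ in operator norm. (Lemma 3.1, part 2: for unbiased linear recovery algorithms, Λ_U(A) = ‖A_ℓ‖.) -/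
theorem idem_norm_aux {U : Type*} [NormedAddCommGroup U] [InnerProductSpace ℝ U]
    (P : U →L[ℝ] U) (hP : ∀ x, P (P x) = P x) (h0 : P ≠ 0) :
    ‖ContinuousLinearMap.id ℝ U - P‖ ≤ ‖P‖ := by
  refine ContinuousLinearMap.opNorm_le_bound _ (norm_nonneg _) fun x => ?_
  have hx0 : (ContinuousLinearMap.id ℝ U - P) x = x - P x := by simp
  rw [hx0]
  obtain ⟨u, hu⟩ : ∃ u, u = P x := ⟨_, rfl⟩
  obtain ⟨v, hv⟩ : ∃ v, v = x - P x := ⟨_, rfl⟩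
  have hPu : P u = u := by rw [hu, hP]
  have hPv : P v = 0 := by rw [hv, map_sub, hP, sub_self]
  have hx : x = u + v := by rw [hu, hv]; abel
  rw [← hv]
  by_cases hu0 : u = 0
  · have h1 : 1 ≤ ‖P‖ := by
      obtain ⟨y, hy⟩ : ∃ y, P y ≠ 0 := by
        by_contra hc
        push Not at hc
        exact h0 (ContinuousLinearMap.ext fun y => by simp [hc y])
      have h2 := P.le_opNorm (P y)
      rw [hP] at h2
      have h3 : 0 < ‖P y‖ := norm_pos_iff.mpr hy
      nlinarith
    rw [hx, hu0, zero_add]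
    nlinarith [norm_nonneg v]
  by_cases hv0 : v = 0
  · rw [hv0, norm_zero]; positivity
  have hun : 0 < ‖u‖ := norm_pos_iff.mpr hu0
  have hvn : 0 < ‖v‖ := norm_pos_iff.mpr hv0
  have hw := P.le_opNorm ((‖v‖ / ‖u‖) • u + (‖u‖ / ‖v‖) • v)
  have e1 : P ((‖v‖ / ‖u‖) • u + (‖u‖ / ‖v‖) • v) = (‖v‖ / ‖u‖) • u := by
    simp [hPu, hPv]
  have e2 : ‖(‖v‖ / ‖u‖) • u‖ = ‖v‖ := by
    rw [norm_smul, Real.norm_of_nonneg (by positivity)]; field_simp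
  have e3 : ‖(‖u‖ / ‖v‖) • v‖ = ‖u‖ := by
    rw [norm_smul, Real.norm_of_nonneg (by positivity)]; field_simp
  have e4 : ‖(‖v‖ / ‖u‖) • u + (‖u‖ / ‖v‖) • v‖ = ‖u + v‖ := by
    rw [← sq_eq_sq₀ (norm_nonneg _) (norm_nonneg _), norm_add_sq_real, norm_add_sq_real, e2, e3,
      real_inner_smul_left, real_inner_smul_right]
    field_simp
    ring
  rw [e1, e2, e4, ← hx] at hw
  exact hw

/-- **Lemma 3.1, part 2.**
Let A : ℝ^M → U be linear, ℓ : U → ℝ^M bounded linear, A_ℓ = A ∘ ℓ, and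
suppose A_ℓ(u) = u for every u in the range of A.  Then A_ℓ is idempotent,
and if moreover A_ℓ ≠ 0 and A_ℓ ≠ id, then ‖id − A_ℓ‖ = ‖A_ℓ‖. -/
theorem perfect_algorithm_idempotent_norm
    {U : Type*} [NormedAddCommGroup U] [InnerProductSpace ℝ U] [CompleteSpace U]
    {M : ℕ}
    (A : EuclideanSpace ℝ (Fin M) →L[ℝ] U)
    (l : U →L[ℝ] EuclideanSpace ℝ (Fin M))
    (h : ∀ y : EuclideanSpace ℝ (Fin M), A (l (A y)) = A y) :
    (A.comp l).comp (A.comp l) = A.comp l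
    ∧ (A.comp l ≠ 0 → A.comp l ≠ ContinuousLinearMap.id ℝ U →
        ‖ContinuousLinearMap.id ℝ U - A.comp l‖ = ‖A.comp l‖) := by
  have hP : ∀ x, (A.comp l) ((A.comp l) x) = (A.comp l) x := fun x => h (l x)
  refine ⟨ContinuousLinearMap.ext hP, fun h0 h1 => le_antisymm (idem_norm_aux _ hP h0) ?_⟩
  have := idem_norm_aux (ContinuousLinearMap.id ℝ U - A.comp l) (fun x => by
    have := hP x
    simp only [ContinuousLinearMap.sub_apply, ContinuousLinearMap.id_apply, map_sub, this]
    abel) (fun hc => h1 (sub_eq_zero.mp hc).symm)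
  rwa [sub_sub_cancel] at this
end

section
/- Let A: ℝ^M → U be a linear map with finite-dimensional range, let ℓ: U → ℝ^M be a bounded linear map, and set A_ℓ = A ∘ ℓ. Define Λ₂(A) = sup over nonzero y ∈ ℝ^M of ‖A(y)‖/‖y‖₂, Λ_U(A) = sup over nonzero u ∈ U of ‖u − A_ℓ(u)‖/‖u‖, and Λ_U^bias(A) = sup over nonzero w in the range of A of ‖w − A_ℓ(w)‖/‖w‖. Then for every u ∈ U and every y ∈ ℝ^M: ‖A(y) − u‖ ≤ Λ₂(A)·‖y − ℓ(u)‖₂ + Λ_U(A)·‖Π_{range(A)^⊥}(u)‖ + Λ_U^bias(A)·‖u‖, where Π_{range(A)^⊥} is the orthogonal projection onto the orthogonal complement of the range of A. (Proposition 3.2, estimate (3.5).) -/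
theorem ratio_bound_aux {E F : Type*} [NormedAddCommGroup E] [NormedAddCommGroup F]
    (f : E → F) (C : ℝ) (hC : ∀ v, ‖f v‖ ≤ C * ‖v‖) (R : Set ℝ)
    (hR : ∀ r ∈ R, ∃ v : E, v ≠ 0 ∧ r = ‖f v‖ / ‖v‖)
    (x : E) (hx : x ≠ 0 → ‖f x‖ / ‖x‖ ∈ R) : ‖f x‖ ≤ sSup R * ‖x‖ := by
  by_cases h0 : x = 0
  · have := hC x
    subst h0
    simpa using this
  · have hb : BddAbove R := by
      refine ⟨C, fun r hr => ?_⟩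
      obtain ⟨v, hv, rfl⟩ := hR r hr
      exact (div_le_iff₀ (norm_pos_iff.mpr hv)).mpr (hC v)
    exact (div_le_iff₀ (norm_pos_iff.mpr h0)).mp (le_csSup hb (hx h0))

/-- **Proposition 3.2, estimate (3.5).**
For a linear recovery algorithm A : ℝ^M → U (finite rank) and bounded linear
observations ℓ : U → ℝ^M, with A_ℓ = A ∘ ℓ and the stability constants
Λ₂(A), Λ_U(A), Λ_U^bias(A), one has, for every u ∈ U and y ∈ ℝ^M,
‖A(y) − u‖ ≤ Λ₂(A)‖y − ℓ(u)‖₂ + Λ_U(A)‖Π_{range(A)^⊥}u‖ + Λ_U^bias(A)‖u‖. -/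
theorem linear_recovery_error_bound
    {U : Type*} [NormedAddCommGroup U] [InnerProductSpace ℝ U] [CompleteSpace U]
    {M : ℕ}
    (A : EuclideanSpace ℝ (Fin M) →ₗ[ℝ] U)
    (l : U →L[ℝ] EuclideanSpace ℝ (Fin M))
    (Pperp : U → U)
    (hPperp : ∀ u, Pperp u ∈ (LinearMap.range A)ᗮ
      ∧ u - Pperp u ∈ ((LinearMap.range A)ᗮ)ᗮ)
    (u : U) (y : EuclideanSpace ℝ (Fin M)) :
    ‖A y - u‖
      ≤ sSup {r : ℝ | ∃ v : EuclideanSpace ℝ (Fin M), v ≠ 0 ∧ r = ‖A v‖ / ‖v‖}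
          * ‖y - l u‖
        + sSup {r : ℝ | ∃ v : U, v ≠ 0 ∧ r = ‖v - A (l v)‖ / ‖v‖}
          * ‖Pperp u‖
        + sSup {r : ℝ | ∃ w : U, w ∈ LinearMap.range A ∧ w ≠ 0
              ∧ r = ‖w - A (l w)‖ / ‖w‖}
          * ‖u‖ := by
  obtain ⟨hp1, hp2⟩ := hPperp u
  rw [Submodule.orthogonal_orthogonal] at hp2
  set p := Pperp u with hp
  let A' : EuclideanSpace ℝ (Fin M) →L[ℝ] U := LinearMap.toContinuousLinearMap A
  let T : U →L[ℝ] U := ContinuousLinearMap.id ℝ U - A'.comp l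
  have hA : ∀ v, ‖A v‖ ≤ ‖A'‖ * ‖v‖ := fun v => A'.le_opNorm v
  have hT : ∀ v, ‖v - A (l v)‖ ≤ ‖T‖ * ‖v‖ := fun v => T.le_opNorm v
  have h1 := ratio_bound_aux (fun v => A v) _ hA
    {r : ℝ | ∃ v : EuclideanSpace ℝ (Fin M), v ≠ 0 ∧ r = ‖A v‖ / ‖v‖}
    (fun r hr => hr) (y - l u) (fun h => ⟨_, h, rfl⟩)
  have h2 := ratio_bound_aux (fun v => v - A (l v)) _ hT
    {r : ℝ | ∃ v : U, v ≠ 0 ∧ r = ‖v - A (l v)‖ / ‖v‖}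
    (fun r hr => hr) p (fun h => ⟨_, h, rfl⟩)
  have h3 := ratio_bound_aux (fun v => v - A (l v)) _ hT
    {r : ℝ | ∃ w : U, w ∈ LinearMap.range A ∧ w ≠ 0 ∧ r = ‖w - A (l w)‖ / ‖w‖}
    (fun r ⟨w, _, hw⟩ => ⟨w, hw⟩) (u - p) (fun h => ⟨_, hp2, h, rfl⟩)
  have hs : 0 ≤ sSup {r : ℝ | ∃ w : U, w ∈ LinearMap.range A ∧ w ≠ 0
      ∧ r = ‖w - A (l w)‖ / ‖w‖} := by
    apply Real.sSup_nonneg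
    rintro r ⟨w, _, _, rfl⟩
    positivity
  have hn : ‖u - p‖ ≤ ‖u‖ := by
    have ho : inner ℝ (u - p) p = 0 := hp1 _ hp2
    have := norm_add_sq_real (u - p) p
    rw [ho, sub_add_cancel] at this
    refine abs_le_of_sq_le_sq' ?_ (norm_nonneg u) |>.2
    nlinarith [sq_nonneg ‖p‖]
  have h4 := mul_le_mul_of_nonneg_left hn hs
  have he : A y - u = A (y - l u) - (p - A (l p)) - ((u - p) - A (l (u - p))) := by
    simp only [map_sub]
    abel
  have h5 : ‖A y - u‖ ≤ ‖A (y - l u)‖ + ‖p - A (l p)‖ + ‖(u - p) - A (l (u - p))‖ := by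
    rw [he]
    exact (norm_sub_le _ _).trans (by gcongr; exact norm_sub_le _ _)
  linarith
end

section
/- Let A: ℝ^M → U be a linear map with finite-dimensional range, let ℓ: U → ℝ^M be a bounded linear map, set A_ℓ = A ∘ ℓ, and define Λ₂(A) = sup over nonzero y of ‖A(y)‖/‖y‖₂, Λ_U(A) = sup over nonzero u of ‖u − A_ℓ(u)‖/‖u‖, Λ_U^bias(A) = sup over nonzero w in range(A) of ‖w − A_ℓ(w)‖/‖w‖. Let Z ⊆ range(A) be a closed subspace such that A_ℓ(z) = z for all z ∈ Z. Then for every u ∈ U and y ∈ ℝ^M: ‖A(y) − u‖ ≤ Λ₂(A)·‖y − ℓ(u)‖₂ + (Λ_U(A) + Λ_U^bias(A))·‖Π_{Z^⊥}(u)‖, where Π_{Z^⊥} is the orthogonal projection onto the orthogonal complement of Z. (Error bound for linear PBDW, displayed in Section 3.1.3.) -/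
theorem pbdw_aux {E F : Type*} [NormedAddCommGroup E] [NormedSpace ℝ E]
    [NormedAddCommGroup F] [NormedSpace ℝ F] (f : E →L[ℝ] F) (x : E) :
    ‖f x‖ ≤ sSup {r : ℝ | ∃ v : E, v ≠ 0 ∧ r = ‖f v‖ / ‖v‖} * ‖x‖ := by
  by_cases hx : x = 0
  · simp [hx]
  · rw [← div_le_iff₀ (norm_pos_iff.mpr hx)]
    refine le_csSup ⟨‖f‖, ?_⟩ ⟨x, hx, rfl⟩
    rintro r ⟨v, hv, rfl⟩
    rw [div_le_iff₀ (norm_pos_iff.mpr hv)]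
    exact f.le_opNorm v

/-- **Error bound for linear PBDW (Section 3.1.3).**
Let Z ⊆ range(A) be a closed subspace with A_ℓ(z) = z for all z ∈ Z.  Then
for every u ∈ U and y ∈ ℝ^M,
‖A(y) − u‖ ≤ Λ₂(A)‖y − ℓ(u)‖₂ + (Λ_U(A) + Λ_U^bias(A))‖Π_{Z^⊥}u‖. -/
theorem linear_pbdw_error_bound
    {U : Type*} [NormedAddCommGroup U] [InnerProductSpace ℝ U] [CompleteSpace U]
    {M : ℕ}
    (A : EuclideanSpace ℝ (Fin M) →ₗ[ℝ] U)
    (l : U →L[ℝ] EuclideanSpace ℝ (Fin M))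
    (Z : Submodule ℝ U) (hZclosed : IsClosed (Z : Set U))
    (hZrange : Z ≤ LinearMap.range A)
    (hAZ : ∀ z ∈ Z, A (l z) = z)
    (Pperp : U → U)
    (hPperp : ∀ u, Pperp u ∈ Zᗮ ∧ u - Pperp u ∈ Zᗮᗮ)
    (u : U) (y : EuclideanSpace ℝ (Fin M)) :
    ‖A y - u‖
      ≤ sSup {r : ℝ | ∃ v : EuclideanSpace ℝ (Fin M), v ≠ 0 ∧ r = ‖A v‖ / ‖v‖}
          * ‖y - l u‖
        + (sSup {r : ℝ | ∃ v : U, v ≠ 0 ∧ r = ‖v - A (l v)‖ / ‖v‖}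
            + sSup {r : ℝ | ∃ w : U, w ∈ LinearMap.range A ∧ w ≠ 0
                ∧ r = ‖w - A (l w)‖ / ‖w‖})
          * ‖Pperp u‖ := by
  have hz : u - Pperp u ∈ Z := by
    have h := (hPperp u).2
    rw [Submodule.orthogonal_orthogonal_eq_closure] at h
    have h2 : u - Pperp u ∈ closure (Z : Set U) := h
    rwa [hZclosed.closure_eq] at h2
  have e := hAZ _ hz
  rw [map_sub, map_sub] at e
  have h1 := pbdw_aux (LinearMap.toContinuousLinearMap A) (y - l u)
  have h2 := pbdw_aux (ContinuousLinearMap.id ℝ U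
    - (LinearMap.toContinuousLinearMap A).comp l) (Pperp u)
  simp only [LinearMap.coe_toContinuousLinearMap', sub_apply,
    ContinuousLinearMap.id_apply, ContinuousLinearMap.comp_apply] at h1 h2
  have h3 : 0 ≤ sSup {r : ℝ | ∃ w : U, w ∈ LinearMap.range A ∧ w ≠ 0
                ∧ r = ‖w - A (l w)‖ / ‖w‖} := by
    apply Real.sSup_nonneg
    rintro r ⟨w, -, -, rfl⟩
    positivity
  have h4 := mul_nonneg h3 (norm_nonneg (Pperp u))
  have e2 : u - A (l u) = Pperp u - A (l (Pperp u)) := by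
    rw [sub_eq_sub_iff_add_eq_add] at e ⊢
    rw [← e, add_comm]
  have e3 : A y - u = A (y - l u) - (Pperp u - A (l (Pperp u))) := by
    rw [← e2, map_sub]; abel
  rw [e3, add_mul]
  have h5 := norm_sub_le (A (y - l u)) (Pperp u - A (l (Pperp u)))
  linarith
end

section
/- Let Z and V be closed subspaces of U with Z ≠ {0}, and let Π_V denote the orthogonal projection onto V. Then the infimum over all pairs (z, η) with z ∈ Z, η ∈ Z^⊥ ∩ V and (z, η) ≠ (0, 0) of the quantity ‖Π_V(z) + η‖² / (‖z‖² + ‖η‖²) equals the infimum over nonzero z ∈ Z of ‖Π_V(z)‖² / ‖z‖². Moreover, for z ∈ Z and η ∈ Z^⊥ ∩ V one has Π_V(z + η) = Π_V(z) + η and ‖Π_V(z) + η‖² = ‖Π_V(z)‖² + ‖η‖². (Key identity β̃ = β_{N,M} in the proof of identity (3.14), relating the quasi-optimality constant of PBDW with ξ = 0 to the inf-sup constant.) -/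
/-- **Key identity β̃ = β_{N,M} in the proof of identity (3.14).**
Let Z, V be closed subspaces of the Hilbert space U with Z ≠ {0} and let Π_V
be the orthogonal projection onto V.  Then
inf over (z, η) ∈ Z × (Z^⊥ ∩ V), (z, η) ≠ (0,0), of ‖Π_V z + η‖²/(‖z‖² + ‖η‖²)
equals inf over nonzero z ∈ Z of ‖Π_V z‖²/‖z‖².  Moreover, for such z and η,
Π_V(z + η) = Π_V z + η and ‖Π_V z + η‖² = ‖Π_V z‖² + ‖η‖². -/
theorem inf_sup_identity_pbdw
    {U : Type*} [NormedAddCommGroup U] [InnerProductSpace ℝ U] [CompleteSpace U]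
    (Z V : Submodule ℝ U)
    (hZclosed : IsClosed (Z : Set U)) (hVclosed : IsClosed (V : Set U))
    (hZ : Z ≠ ⊥)
    (PV : U → U) (hPV : ∀ u, PV u ∈ V ∧ u - PV u ∈ Vᗮ) :
    (sInf {r : ℝ | ∃ z η : U, z ∈ Z ∧ η ∈ Zᗮ ⊓ V ∧ ¬(z = 0 ∧ η = 0)
          ∧ r = ‖PV z + η‖ ^ 2 / (‖z‖ ^ 2 + ‖η‖ ^ 2)}
        = sInf {r : ℝ | ∃ z : U, z ∈ Z ∧ z ≠ 0 ∧ r = ‖PV z‖ ^ 2 / ‖z‖ ^ 2})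
    ∧ ∀ z ∈ Z, ∀ η ∈ Zᗮ ⊓ V,
        PV (z + η) = PV z + η ∧ ‖PV z + η‖ ^ 2 = ‖PV z‖ ^ 2 + ‖η‖ ^ 2 := by
  have uniq : ∀ u a, a ∈ V → u - a ∈ Vᗮ → PV u = a := by
    intro u a ha hua
    have h1 : PV u - a ∈ V := V.sub_mem (hPV u).1 ha
    have h2 : PV u - a ∈ Vᗮ := by
      have := Vᗮ.sub_mem hua (hPV u).2
      have e : PV u - a = (u - a) - (u - PV u) := by abel
      rw [e]; exact this
    have h3 : inner ℝ (PV u - a) (PV u - a) = 0 := (Submodule.mem_orthogonal V _).1 h2 _ h1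
    exact sub_eq_zero.1 (inner_self_eq_zero.1 h3)
  have hle : ∀ u, ‖PV u‖ ^ 2 ≤ ‖u‖ ^ 2 := by
    intro u
    have h3 : inner ℝ (PV u) (u - PV u) = 0 :=
      (Submodule.mem_orthogonal V _).1 (hPV u).2 _ (hPV u).1
    have h4 := norm_add_sq_real (PV u) (u - PV u)
    rw [h3, add_sub_cancel] at h4
    nlinarith [sq_nonneg ‖u - PV u‖]
  have key : ∀ z ∈ Z, ∀ η ∈ Zᗮ ⊓ V,
        PV (z + η) = PV z + η ∧ ‖PV z + η‖ ^ 2 = ‖PV z‖ ^ 2 + ‖η‖ ^ 2 := by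
    intro z hz η hη
    obtain ⟨h1, h2⟩ := Submodule.mem_inf.1 hη
    refine ⟨uniq _ _ (V.add_mem (hPV z).1 h2) ?_, ?_⟩
    · rw [add_sub_add_right_eq_sub]; exact (hPV z).2
    · have h3 : inner ℝ z η = 0 := (Submodule.mem_orthogonal Z _).1 h1 _ hz
      have h4 : inner ℝ (z - PV z) η = 0 := (Submodule.mem_orthogonal' V _).1 (hPV z).2 _ h2
      rw [inner_sub_left] at h4
      have h5 := norm_add_sq_real (PV z) η
      linarith
  refine ⟨?_, key⟩
  obtain ⟨z0, hz0, hz0'⟩ := Submodule.exists_mem_ne_zero_of_ne_bot hZ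
  have bdd : BddBelow {r : ℝ | ∃ z : U, z ∈ Z ∧ z ≠ 0 ∧ r = ‖PV z‖ ^ 2 / ‖z‖ ^ 2} := by
    refine ⟨0, ?_⟩
    rintro r ⟨z, -, -, rfl⟩
    positivity
  apply le_antisymm
  · apply csInf_le_csInf
    · refine ⟨0, ?_⟩
      rintro r ⟨z, η, -, -, -, rfl⟩
      positivity
    · exact ⟨_, z0, hz0, hz0', rfl⟩
    · rintro r ⟨z, hz, hz', rfl⟩
      exact ⟨z, 0, hz, Submodule.zero_mem _, fun h => hz' h.1, by simp⟩
  · apply le_csInf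
    · exact ⟨_, z0, 0, hz0, Submodule.zero_mem _, fun h => hz0' h.1, rfl⟩
    · rintro r ⟨z, η, hz, hη, hne, rfl⟩
      rw [(key z hz η hη).2]
      by_cases h0 : z = 0
      · subst h0
        have hη0 : η ≠ 0 := fun h => hne ⟨rfl, h⟩
        have hp : 0 < ‖η‖ ^ 2 := by positivity
        have hp0 : 0 < ‖z0‖ ^ 2 := by positivity
        refine (csInf_le bdd ⟨z0, hz0, hz0', rfl⟩).trans ?_
        refine ((div_le_one hp0).2 (hle z0)).trans ?_
        rw [le_div_iff₀ (by positivity), norm_zero]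
        nlinarith [sq_nonneg ‖PV 0‖]
      · have hp : 0 < ‖z‖ ^ 2 := by positivity
        refine (csInf_le bdd ⟨z, hz, h0, rfl⟩).trans ?_
        rw [div_le_div_iff₀ hp (by positivity)]
        nlinarith [mul_le_mul_of_nonneg_right (hle z) (sq_nonneg ‖η‖)]
end

section
/- Let L ∈ ℝ^{M×N} with M ≥ N have full column rank (so LᵀL is invertible), and let D ∈ ℝ^{N×M} satisfy D·L = 0. Then: (i) ((LᵀL)⁻¹Lᵀ + D)·((LᵀL)⁻¹Lᵀ + D)ᵀ = (LᵀL)⁻¹ + D·Dᵀ; and (ii) the largest singular value of (LᵀL)⁻¹Lᵀ + D is at least the largest singular value of (LᵀL)⁻¹Lᵀ, i.e., s_max((LᵀL)⁻¹Lᵀ + D) ≥ s_max((LᵀL)⁻¹Lᵀ). (Proposition 3.4, first inequality: among all linear unbiased recovery algorithms with background space Z_N, the PBDW algorithm with ξ = ∞ minimizes the noise-stability constant Λ₂.) -/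
open Matrix

/-- The largest singular value of a real matrix, i.e. its operator norm as a
map between Euclidean spaces: s_max(B) = sup_{x ≠ 0} ‖Bx‖₂ / ‖x‖₂. -/
noncomputable def sMax {m n : ℕ} (B : Matrix (Fin m) (Fin n) ℝ) : ℝ :=
  sSup {r : ℝ | ∃ x : Fin n → ℝ, x ≠ 0
    ∧ r = Real.sqrt (B.mulVec x ⬝ᵥ B.mulVec x) / Real.sqrt (x ⬝ᵥ x)}

lemma sMax_bdd {m n : ℕ} (B : Matrix (Fin m) (Fin n) ℝ) :
    BddAbove {r : ℝ | ∃ x : Fin n → ℝ, x ≠ 0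
    ∧ r = Real.sqrt (B.mulVec x ⬝ᵥ B.mulVec x) / Real.sqrt (x ⬝ᵥ x)} := by
  have key : ∀ {k : ℕ} (y : Fin k → ℝ), Real.sqrt (y ⬝ᵥ y) = ‖WithLp.toLp 2 y‖ := by
    intro k y
    rw [EuclideanSpace.norm_eq]
    simp [dotProduct, sq]
  refine ⟨‖(Matrix.toEuclideanLin B).toContinuousLinearMap‖, ?_⟩
  rintro r ⟨x, hx, rfl⟩
  rw [key, key]
  refine div_le_of_le_mul₀ (norm_nonneg _) (norm_nonneg _) ?_
  exact (Matrix.toEuclideanLin B).toContinuousLinearMap.le_opNorm (WithLp.toLp 2 x)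

lemma sMax_nonneg {m n : ℕ} (B : Matrix (Fin m) (Fin n) ℝ) : 0 ≤ sMax B := by
  apply Real.sSup_nonneg
  rintro r ⟨x, hx, rfl⟩
  positivity

lemma sMax_mulVec {m n : ℕ} (B : Matrix (Fin m) (Fin n) ℝ) (x : Fin n → ℝ) :
    Real.sqrt (B.mulVec x ⬝ᵥ B.mulVec x) ≤ sMax B * Real.sqrt (x ⬝ᵥ x) := by
  by_cases hx : x = 0
  · subst hx; simp
  have h0 : 0 < x ⬝ᵥ x := by
    have h1 : 0 ≤ x ⬝ᵥ x := Finset.sum_nonneg fun i _ => mul_self_nonneg _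
    exact lt_of_le_of_ne h1 fun h => hx (dotProduct_self_eq_zero.1 h.symm)
  rw [← div_le_iff₀ (Real.sqrt_pos.2 h0)]
  exact le_csSup (sMax_bdd B) ⟨x, hx, rfl⟩

/-- **Proposition 3.4, first inequality.**
Let L ∈ ℝ^{M×N} (M ≥ N) have full column rank and let D ∈ ℝ^{N×M} satisfy
D·L = 0.  Then ((LᵀL)⁻¹Lᵀ + D)((LᵀL)⁻¹Lᵀ + D)ᵀ = (LᵀL)⁻¹ + DDᵀ and
s_max((LᵀL)⁻¹Lᵀ + D) ≥ s_max((LᵀL)⁻¹Lᵀ). -/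
theorem pbdw_xi_infty_minimizes_Lambda2
    {M N : ℕ} (hMN : N ≤ M)
    (L : Matrix (Fin M) (Fin N) ℝ)
    (hfullrank : ∀ z : Fin N → ℝ, L.mulVec z = 0 → z = 0)
    (D : Matrix (Fin N) (Fin M) ℝ) (hD : D * L = 0) :
    ((Lᵀ * L)⁻¹ * Lᵀ + D) * ((Lᵀ * L)⁻¹ * Lᵀ + D)ᵀ
        = (Lᵀ * L)⁻¹ + D * Dᵀ
    ∧ sMax ((Lᵀ * L)⁻¹ * Lᵀ) ≤ sMax ((Lᵀ * L)⁻¹ * Lᵀ + D) := by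
  have hu : IsUnit (Lᵀ * L).det := by
    rw [isUnit_iff_ne_zero]
    intro h
    obtain ⟨v, hv, hv0⟩ := Matrix.exists_mulVec_eq_zero_iff.2 h
    apply hv
    apply hfullrank
    rw [← dotProduct_self_eq_zero]
    rw [Matrix.dotProduct_mulVec, Matrix.vecMul_mulVec, ← Matrix.dotProduct_mulVec] 
    simp [hv0]
  have hG : (Lᵀ * L)⁻¹ᵀ = (Lᵀ * L)⁻¹ := by
    rw [Matrix.transpose_nonsing_inv]; simp
  have hD' : Lᵀ * Dᵀ = 0 := by rw [← Matrix.transpose_mul, hD]; simp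
  have hAL : (Lᵀ * L)⁻¹ * Lᵀ * L = 1 := by
    rw [Matrix.mul_assoc, Matrix.nonsing_inv_mul _ hu]
  have hAt : ((Lᵀ * L)⁻¹ * Lᵀ)ᵀ = L * (Lᵀ * L)⁻¹ := by
    rw [Matrix.transpose_mul, hG, Matrix.transpose_transpose]
  constructor
  · rw [Matrix.transpose_add, hAt, Matrix.add_mul, Matrix.mul_add, Matrix.mul_add,
      ← Matrix.mul_assoc, hAL, Matrix.mul_assoc _ Lᵀ Dᵀ, hD', ← Matrix.mul_assoc D L, hD]
    simp
  · set A := (Lᵀ * L)⁻¹ * Lᵀ with hA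
    have hBP : (A + D) * (L * A) = A := by
      rw [← Matrix.mul_assoc, Matrix.add_mul, hAL, hD]; simp
    have hPt : (L * A)ᵀ = L * A := by
      rw [Matrix.transpose_mul, hAt, hA, Matrix.mul_assoc, ← Matrix.mul_assoc]
    have hPP : (L * A) * (L * A) = L * A := by
      rw [Matrix.mul_assoc, ← Matrix.mul_assoc A, hAL, Matrix.one_mul]
    refine Real.sSup_le ?_ (sMax_nonneg _)
    rintro r ⟨x, hx, rfl⟩
    refine div_le_of_le_mul₀ (Real.sqrt_nonneg _) (sMax_nonneg _) ?_
    have h1 := sMax_mulVec (A + D) ((L * A) *ᵥ x)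
    rw [Matrix.mulVec_mulVec, hBP] at h1
    refine h1.trans (mul_le_mul_of_nonneg_left (Real.sqrt_le_sqrt ?_) (sMax_nonneg _))
    have h2 : ((L * A) *ᵥ x) ⬝ᵥ ((L * A) *ᵥ x) = x ⬝ᵥ ((L * A) *ᵥ x) := by
      conv_lhs => rw [Matrix.dotProduct_mulVec, Matrix.vecMul_mulVec, hPt, hPP]
      rw [← Matrix.dotProduct_mulVec]
      
    have h3 : 0 ≤ (x - (L * A) *ᵥ x) ⬝ᵥ (x - (L * A) *ᵥ x) :=
      Finset.sum_nonneg fun i _ => mul_self_nonneg _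
    rw [sub_dotProduct, dotProduct_sub, dotProduct_sub, h2, dotProduct_comm ((L * A) *ᵥ x) x] at h3
    linarith
end

section
/- Let K ∈ ℝ^{M×M} be symmetric positive definite, let L ∈ ℝ^{M×N} with M ≥ N have full column rank (so LᵀK⁻¹L is invertible), and let E ∈ ℝ^{N×M} satisfy E·L = 0. Set B = K⁻¹·L·(LᵀK⁻¹L)⁻¹ + Eᵀ ∈ ℝ^{M×N}. Then: (i) Bᵀ·K·B = (LᵀK⁻¹L)⁻¹ + E·K·Eᵀ; and (ii) for every z ∈ ℝ^N, zᵀ·Bᵀ·K·B·z ≥ zᵀ·(LᵀK⁻¹L)⁻¹·z; hence sup over nonzero z of (zᵀBᵀKBz)/‖z‖₂² is at least sup over nonzero z of (zᵀ(LᵀK⁻¹L)⁻¹z)/‖z‖₂². (Proposition 3.4, second inequality: among all linear unbiased recovery algorithms with background space Z_N, the background component of PBDW with ξ = 0 minimizes the quasi-optimality constant Λ_U.) -/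
open Matrix

lemma rayleigh_bdd {N : ℕ} (A : Matrix (Fin N) (Fin N) ℝ) (z : Fin N → ℝ) :
    z ⬝ᵥ A.mulVec z ≤ (∑ i, ∑ j, |A i j|) * (z ⬝ᵥ z) := by
  have hsq : ∀ i, z i * z i ≤ z ⬝ᵥ z := fun i =>
    Finset.single_le_sum (f := fun i => z i * z i) (fun j _ => mul_self_nonneg (z j))
      (Finset.mem_univ i)
  rw [Finset.sum_mul]
  have e : z ⬝ᵥ A.mulVec z = ∑ i, ∑ j, z i * (A i j * z j) := by
    simp only [dotProduct, mulVec, Finset.mul_sum]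
  rw [e]
  refine Finset.sum_le_sum fun i _ => ?_
  rw [Finset.sum_mul]
  refine Finset.sum_le_sum fun j _ => ?_
  have h1 : |z i * z j| ≤ z ⬝ᵥ z := by
    rw [abs_le]
    constructor
    · nlinarith [hsq i, hsq j, mul_self_nonneg (z i + z j)]
    · nlinarith [hsq i, hsq j, mul_self_nonneg (z i - z j)]
  calc z i * (A i j * z j) = A i j * (z i * z j) := by ring
    _ ≤ |A i j * (z i * z j)| := le_abs_self _
    _ = |A i j| * |z i * z j| := abs_mul _ _
    _ ≤ _ := mul_le_mul_of_nonneg_left h1 (abs_nonneg _)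

/-- **Proposition 3.4, second inequality.**
Let K be symmetric positive definite, L ∈ ℝ^{M×N} (M ≥ N) of full column rank,
E ∈ ℝ^{N×M} with E·L = 0, and B = K⁻¹L(LᵀK⁻¹L)⁻¹ + Eᵀ.  Then
BᵀKB = (LᵀK⁻¹L)⁻¹ + EKEᵀ, hence zᵀBᵀKBz ≥ zᵀ(LᵀK⁻¹L)⁻¹z for all z, and the
corresponding Rayleigh suprema are ordered accordingly. -/
theorem pbdw_xi_zero_minimizes_LambdaU
    {M N : ℕ} (hMN : N ≤ M)
    (K : Matrix (Fin M) (Fin M) ℝ) (hK : K.PosDef)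
    (L : Matrix (Fin M) (Fin N) ℝ)
    (hfullrank : ∀ z : Fin N → ℝ, L.mulVec z = 0 → z = 0)
    (E : Matrix (Fin N) (Fin M) ℝ) (hE : E * L = 0) :
    let B : Matrix (Fin M) (Fin N) ℝ := K⁻¹ * L * (Lᵀ * K⁻¹ * L)⁻¹ + Eᵀ
    (Bᵀ * K * B = (Lᵀ * K⁻¹ * L)⁻¹ + E * K * Eᵀ)
    ∧ (∀ z : Fin N → ℝ,
        z ⬝ᵥ ((Lᵀ * K⁻¹ * L)⁻¹).mulVec z ≤ z ⬝ᵥ (Bᵀ * K * B).mulVec z)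
    ∧ sSup {r : ℝ | ∃ z : Fin N → ℝ, z ≠ 0
          ∧ r = (z ⬝ᵥ ((Lᵀ * K⁻¹ * L)⁻¹).mulVec z) / (z ⬝ᵥ z)}
        ≤ sSup {r : ℝ | ∃ z : Fin N → ℝ, z ≠ 0
          ∧ r = (z ⬝ᵥ (Bᵀ * K * B).mulVec z) / (z ⬝ᵥ z)} := by
  intro B
  have hKu : IsUnit K.det := (Matrix.isUnit_iff_isUnit_det K).1 hK.isUnit
  have hKt : Kᵀ = K := by simpa using hK.isHermitian.eq
  have hG : (Lᵀ * K⁻¹ * L).PosDef := by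
    have := hK.inv.conjTranspose_mul_mul_same (B := L) (by
      intro x y hxy
      have := hfullrank (x - y) (by rw [Matrix.mulVec_sub]; exact sub_eq_zero.2 hxy)
      exact sub_eq_zero.1 this)
    simpa using this
  have hGu : IsUnit (Lᵀ * K⁻¹ * L).det := (Matrix.isUnit_iff_isUnit_det _).1 hG.isUnit
  have hGt : (Lᵀ * K⁻¹ * L)ᵀ = Lᵀ * K⁻¹ * L := by simpa using hG.isHermitian.eq
  have hLE : Lᵀ * Eᵀ = 0 := by rw [← Matrix.transpose_mul, hE, Matrix.transpose_zero]
  have h1 : Bᵀ * K * B = (Lᵀ * K⁻¹ * L)⁻¹ + E * K * Eᵀ := by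
    have hBt : Bᵀ = (Lᵀ * K⁻¹ * L)⁻¹ * (Lᵀ * K⁻¹) + E := by
      simp only [B, Matrix.transpose_add, Matrix.transpose_mul, Matrix.transpose_nonsing_inv,
        Matrix.transpose_transpose, hKt, Matrix.mul_assoc]
    have hKB : K * B = L * (Lᵀ * K⁻¹ * L)⁻¹ + K * Eᵀ := by
      simp only [B, Matrix.mul_add, ← Matrix.mul_assoc, Matrix.mul_nonsing_inv K hKu,
        Matrix.one_mul]
    rw [Matrix.mul_assoc, hBt, hKB]
    generalize hGdef : (Lᵀ * K⁻¹ * L)⁻¹ = G at *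
    have a1 : G * (Lᵀ * K⁻¹) * (L * G) = G := by
      rw [← Matrix.mul_assoc, Matrix.mul_assoc G, ← hGdef,
        Matrix.nonsing_inv_mul _ hGu, Matrix.one_mul]
    have a2 : G * (Lᵀ * K⁻¹) * (K * Eᵀ) = 0 := by
      rw [← Matrix.mul_assoc, Matrix.mul_assoc G, Matrix.mul_assoc Lᵀ,
        Matrix.nonsing_inv_mul _ hKu, Matrix.mul_one, Matrix.mul_assoc, hLE, Matrix.mul_zero]
    have a3 : E * (L * G) = 0 := by rw [← Matrix.mul_assoc, hE, Matrix.zero_mul]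
    rw [Matrix.add_mul, Matrix.mul_add, Matrix.mul_add, a1, a2, a3, Matrix.mul_assoc]
    simp
  have h2 : ∀ z : Fin N → ℝ,
      z ⬝ᵥ ((Lᵀ * K⁻¹ * L)⁻¹).mulVec z ≤ z ⬝ᵥ (Bᵀ * K * B).mulVec z := by
    intro z
    rw [h1, Matrix.add_mulVec, dotProduct_add]
    have hp : (E * K * Eᵀ).PosSemidef := by
      simpa using hK.posSemidef.mul_mul_conjTranspose_same E
    have := hp.dotProduct_mulVec_nonneg z
    simp only [star_trivial] at this
    linarith
  refine ⟨h1, h2, ?_⟩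
  by_cases hz : ∃ z : Fin N → ℝ, z ≠ 0
  · obtain ⟨z0, hz0⟩ := hz
    refine csSup_le ⟨_, z0, hz0, rfl⟩ ?_
    rintro r ⟨z, hz, rfl⟩
    have hnn : ∀ w : Fin N → ℝ, 0 ≤ w ⬝ᵥ w := fun w =>
      Finset.sum_nonneg fun i _ => mul_self_nonneg (w i)
    refine le_csSup_of_le ?_ ⟨z, hz, rfl⟩ (div_le_div_of_nonneg_right (h2 z) (hnn z))
    refine ⟨∑ i, ∑ j, |(Bᵀ * K * B) i j|, ?_⟩
    rintro r ⟨w, hw, rfl⟩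
    refine div_le_of_le_mul₀ (hnn w) ?_ (rayleigh_bdd _ w)
    exact Finset.sum_nonneg fun i _ => Finset.sum_nonneg fun j _ => abs_nonneg _
  · push Not at hz
    apply le_of_eq
    congr 1
    ext r
    constructor
    · rintro ⟨z, h, _⟩
      exact absurd (hz z) h
    · rintro ⟨z, h, _⟩
      exact absurd (hz z) h
end

section
/- Let Z be a closed subspace of U, let ℓ: U → ℝ^M be a bounded linear map, let y ∈ ℝ^M and δ > 0, and define K(δ, y) = { u ∈ U : ‖Π_{Z^⊥}(u)‖ ≤ δ and ℓ(u) = y }, where Π_{Z^⊥} is the orthogonal projection onto the orthogonal complement of Z. Assume K(δ, y) is nonempty. Let û ∈ U satisfy ℓ(û) = y and ‖Π_{Z^⊥}(û)‖ ≤ ‖Π_{Z^⊥}(u)‖ for all u ∈ U with ℓ(u) = y (this characterizes the PBDW estimate with ξ = 0). Then for every w ∈ U: sup over u ∈ K(δ, y) of ‖u − û‖ is at most sup over u ∈ K(δ, y) of ‖u − w‖; i.e., û is a Chebyshev center of K(δ, y) and the PBDW estimate is the minimax-optimal recovery. (Proposition 3.3.) -/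
/-- **Proposition 3.3: minimax optimality of the PBDW estimate (ξ = 0).**
Let K(δ, y) = {u ∈ U : ‖Π_{Z^⊥}u‖ ≤ δ, ℓ(u) = y} be nonempty, and let û
satisfy ℓ(û) = y and ‖Π_{Z^⊥}û‖ ≤ ‖Π_{Z^⊥}u‖ for all u with ℓ(u) = y.  Then
for every w ∈ U, sup_{u ∈ K(δ,y)} ‖u − û‖ ≤ sup_{u ∈ K(δ,y)} ‖u − w‖. -/
theorem pbdw_minimax_optimality
    {U : Type*} [NormedAddCommGroup U] [InnerProductSpace ℝ U] [CompleteSpace U]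
    {M : ℕ}
    (Z : Submodule ℝ U) (hZclosed : IsClosed (Z : Set U))
    (l : U →L[ℝ] EuclideanSpace ℝ (Fin M))
    (y : EuclideanSpace ℝ (Fin M)) (δ : ℝ) (hδ : 0 < δ)
    (Pperp : U → U)
    (hPperp : ∀ u, Pperp u ∈ Zᗮ ∧ u - Pperp u ∈ Zᗮᗮ)
    (hne : {u : U | ‖Pperp u‖ ≤ δ ∧ l u = y}.Nonempty)
    (uhat : U) (huhat₁ : l uhat = y)
    (huhat₂ : ∀ u : U, l u = y → ‖Pperp uhat‖ ≤ ‖Pperp u‖) :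
    ∀ w : U,
      sSup {r : ℝ | ∃ u : U, (‖Pperp u‖ ≤ δ ∧ l u = y) ∧ r = ‖u - uhat‖}
        ≤ sSup {r : ℝ | ∃ u : U, (‖Pperp u‖ ≤ δ ∧ l u = y) ∧ r = ‖u - w‖} := by
  obtain ⟨P, hP⟩ : ∃ P : U →L[ℝ] U, ∀ u, Pperp u = P u := by
    refine ⟨Zᗮ.starProjection, fun u => ?_⟩
    exact (Submodule.eq_starProjection_of_mem_orthogonal (hPperp u).1 (hPperp u).2).symm
  simp only [hP] at *
  have orth : ∀ h : U, l h = 0 → inner ℝ (P uhat) (P h) = 0 := by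
    intro h hh
    have key : ∀ t : ℝ, 0 ≤ ‖P h‖ ^ 2 * (t * t) + (2 * inner ℝ (P uhat) (P h)) * t + 0 := by
      intro t
      have h1 := huhat₂ (uhat + t • h) (by simp [hh, huhat₁])
      have h2 := pow_le_pow_left₀ (norm_nonneg _) h1 2
      rw [map_add, map_smul, norm_add_sq_real, inner_smul_right, norm_smul, mul_pow,
        Real.norm_eq_abs, sq_abs] at h2
      linarith
    have h3 := discrim_le_zero key
    unfold discrim at h3
    have h4 : (inner ℝ (P uhat) (P h)) ^ 2 ≤ 0 := by linarith
    exact pow_eq_zero_iff two_ne_zero |>.1 (le_antisymm h4 (sq_nonneg _))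
  have refl : ∀ u : U, (‖P u‖ ≤ δ ∧ l u = y) →
      (‖P (uhat - (u - uhat))‖ ≤ δ ∧ l (uhat - (u - uhat)) = y) := by
    rintro u ⟨h1, h2⟩
    have ho := orth (u - uhat) (by simp [h2, huhat₁])
    refine ⟨?_, by simp [h2, huhat₁]⟩
    have e : ‖P (uhat - (u - uhat))‖ = ‖P u‖ := by
      have : P u = P uhat + P (u - uhat) := by simp
      rw [this, map_sub P uhat (u - uhat)]
      rw [← sq_eq_sq₀ (norm_nonneg _) (norm_nonneg _), norm_sub_sq_real, norm_add_sq_real, ho]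
      ring
    rw [e]; exact h1
  intro w
  obtain ⟨u0, hu0⟩ := hne
  by_cases hb : BddAbove {r : ℝ | ∃ u : U, (‖P u‖ ≤ δ ∧ l u = y) ∧ r = ‖u - w‖}
  · refine csSup_le ⟨_, u0, hu0, rfl⟩ ?_
    rintro r ⟨u, hu, rfl⟩
    have h1 := le_csSup hb ⟨u, hu, rfl⟩
    have h2 := le_csSup hb ⟨_, refl u hu, rfl⟩
    have h3 : ‖(2:ℝ) • (u - uhat)‖ ≤ ‖u - w‖ + ‖uhat - (u - uhat) - w‖ := by
      have : (2:ℝ) • (u - uhat) = (u - w) - (uhat - (u - uhat) - w) := by module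
      rw [this]; exact norm_sub_le _ _
    rw [norm_smul, Real.norm_eq_abs, abs_two] at h3
    linarith
  · have hb' : ¬ BddAbove {r : ℝ | ∃ u : U, (‖P u‖ ≤ δ ∧ l u = y) ∧ r = ‖u - uhat‖} := by
      rintro ⟨C, hC⟩
      apply hb
      refine ⟨C + ‖uhat - w‖, ?_⟩
      rintro r ⟨u, hu, rfl⟩
      have h1 := hC ⟨u, hu, rfl⟩
      have h2 := norm_sub_le_norm_sub_add_norm_sub u uhat w
      linarith
    rw [Real.sSup_of_not_bddAbove hb, Real.sSup_of_not_bddAbove hb']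
end
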